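/- For every real number Q ≥ 1, every real number x ≥ 16, and every natural number S, if 2^(−Q) · (x / log₂ x)^(S/Q) ≤ x, then S ≤ Q² + 2Q. -/

import Mathlib

/-- For every real `Q ≥ 1`, every real `x ≥ 16`, and every natural number `S`,
if `2^(−Q) · (x / log₂ x)^(S/Q) ≤ x`, then `S ≤ Q² + 2Q`. -/
theorem stmt_0 (Q x : ℝ) (hQ : 1 ≤ Q) (hx : 16 ≤ x) (S : ℕ)
    (h : (2 : ℝ) ^ (-Q) * (x / Real.logb 2 x) ^ ((S : ℝ) / Q) ≤ x) :
    (S : ℝ) ≤ Q ^ 2 + 2 * Q := by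
  have hl : (1 / 2 : ℝ) < Real.log 2 := by linarith [Real.log_two_gt_d9]
  have hx0 : 0 < x := by linarith
  have hlog : Real.log x = Real.logb 2 x * Real.log 2 := by
    unfold Real.logb
    field_simp
  have hL4 : 4 ≤ Real.logb 2 x := by
    rw [Real.le_logb_iff_rpow_le (by norm_num) hx0]
    norm_num
    exact hx
  generalize Real.logb 2 x = L at *
  have hL0 : 0 < L := by linarith
  have h4 : Real.log 4 = 2 * Real.log 2 := by
    rw [show (4 : ℝ) = 2 ^ 2 by norm_num, Real.log_pow]
    norm_num
  have hLL : Real.log L ≤ L * Real.log 2 / 2 := by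
    have h1 := Real.log_le_sub_one_of_pos (show 0 < L / 4 by positivity)
    rw [Real.log_div hL0.ne' (by norm_num), h4] at h1
    nlinarith
  have hdiv : 0 < x / L := by positivity
  have h2 := Real.log_le_log (by positivity) h
  rw [Real.log_mul (by positivity) (by positivity), Real.log_rpow (by norm_num),
    Real.log_rpow hdiv, Real.log_div hx0.ne' hL0.ne', hlog] at h2
  have hQ0 : 0 < Q := by linarith
  have hT0 : 0 ≤ (S : ℝ) / Q := by positivity
  have hS : (S : ℝ) = (S : ℝ) / Q * Q := by field_simp
  generalize (S : ℝ) / Q = T at *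
  have h3 : T * (L * Real.log 2 / 2) ≤ T * (L * Real.log 2 - Real.log L) :=
    mul_le_mul_of_nonneg_left (by linarith) hT0
  have h5 : (T * L / 2) * Real.log 2 ≤ (L + Q) * Real.log 2 := by linarith
  have h6 : T * L / 2 ≤ L + Q := le_of_mul_le_mul_right h5 (by linarith)
  have h7 : T ≤ Q + 2 := by
    by_contra hc
    push Not at hc
    nlinarith
  rw [hS]
  nlinarith
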